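/- Let n ≥ 2 be an integer. For every sequence (γ_i)_{i≥1} with γ_i ∈ π_n(Y_i^{(n)}, 0) satisfying the compatibility condition (r_k^i)_*(γ_i) = γ_k for all k ≤ i, there exists γ ∈ π_n(ℋ_n, 0) such that (R_i)_*(γ) = γ_i for every i ≥ 1. That is, the natural homomorphism β_n : π_n(ℋ_n, 0) → lim← π_n(Y_i^{(n)}, 0) is surjective. -/

import Mathlib

open scoped Topology Topology.Homotopy unitInterval

noncomputable section

/-- The `n`-sphere of radius `1/j` centered at `(1/j, 0, …, 0)` in `ℝ^{n+1}`
(it passes through the origin). -/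
def hawSphere (n j : ℕ) : Set (EuclideanSpace ℝ (Fin (n+1))) :=
  Metric.sphere (EuclideanSpace.single (0 : Fin (n+1)) ((1 : ℝ)/j)) (1/j)

/-- The `n`-dimensional Hawaiian earring: the union of the spheres `hawSphere n j`, `j ≥ 1`. -/
def hawaiian (n : ℕ) : Set (EuclideanSpace ℝ (Fin (n+1))) :=
  ⋃ j ∈ {j : ℕ | 1 ≤ j}, hawSphere n j

/-- The union `Y_i^{(n)}` of the first `i` spheres of the `n`-dimensional Hawaiian earring. -/
def Ysub (n i : ℕ) : Set (EuclideanSpace ℝ (Fin (n+1))) :=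
  ⋃ j ∈ Finset.Icc 1 i, hawSphere n j

lemma zero_mem_hawSphere (n j : ℕ) : (0 : EuclideanSpace ℝ (Fin (n+1))) ∈ hawSphere n j := by
  have : dist (0 : EuclideanSpace ℝ (Fin (n+1)))
      (EuclideanSpace.single (0 : Fin (n+1)) ((1 : ℝ)/j)) = 1/j := by
    rw [dist_zero_left, EuclideanSpace.norm_single, Real.norm_eq_abs,
      abs_of_nonneg (one_div_nonneg.mpr (Nat.cast_nonneg j))]
  exact Metric.mem_sphere.mpr this

lemma zero_mem_hawaiian (n : ℕ) : (0 : EuclideanSpace ℝ (Fin (n+1))) ∈ hawaiian n :=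
  Set.mem_biUnion (by simp : (1 : ℕ) ∈ {j : ℕ | 1 ≤ j}) (zero_mem_hawSphere n 1)

lemma zero_mem_Ysub (n i : ℕ) : (0 : EuclideanSpace ℝ (Fin (n+1))) ∈ Ysub n (i+1) :=
  Set.mem_biUnion (by simp : (1 : ℕ) ∈ Finset.Icc 1 (i+1)) (zero_mem_hawSphere n 1)

/-- The basepoint (the origin) of the Hawaiian earring. -/
def hawaiianPt (n : ℕ) : ↥(hawaiian n) := ⟨0, zero_mem_hawaiian n⟩

/-- The basepoint (the origin) of `Y_{i+1}^{(n)}`. -/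
def YsubPt (n i : ℕ) : ↥(Ysub n (i+1)) := ⟨0, zero_mem_Ysub n i⟩

/-- Composition of a generalized loop with a basepoint-preserving continuous map. -/
def GenLoop.compCM {X Y : Type*} [TopologicalSpace X] [TopologicalSpace Y] {x : X} {y : Y}
    {N : Type*} (φ : C(X, Y)) (hφ : φ x = y) (p : Ω^ N X x) : Ω^ N Y y :=
  ⟨φ.comp p.1, fun t ht => by
    simp only [ContinuousMap.comp_apply]
    rw [p.2 t ht, hφ]⟩

/-- The homomorphism `φ_*` induced on `N`-th homotopy groups by a basepoint-preserving
continuous map `φ`, sending the class of a loop `f` to the class of `φ ∘ f`. -/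
def piInduced {X Y : Type*} [TopologicalSpace X] [TopologicalSpace Y] {x : X} {y : Y}
    (N : Type*) (φ : C(X, Y)) (hφ : φ x = y) :
    HomotopyGroup N X x → HomotopyGroup N Y y :=
  Quotient.map (GenLoop.compCM φ hφ) fun _ _ h =>
    h.map fun F => F.compContinuousMap φ


/-- The unit vector in direction 0. -/
def hvec (n : ℕ) : EuclideanSpace ℝ (Fin (n+1)) := EuclideanSpace.single 0 1

lemma norm_hvec (n : ℕ) : ‖hvec n‖ = 1 := by simp [hvec]

lemma hvec_zero (n : ℕ) : hvec n 0 = 1 := by simp [hvec]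

lemma mem_haw_iff {n j : ℕ} (hj : 1 ≤ j) (z : EuclideanSpace ℝ (Fin (n+1))) :
    z ∈ hawSphere n j ↔ ‖(j : ℝ) • z - hvec n‖ = 1 := by
  have hj' : (0 : ℝ) < j := by exact_mod_cast hj
  have h1 : EuclideanSpace.single (0 : Fin (n+1)) ((1 : ℝ)/j) = (1 / (j:ℝ)) • hvec n := by
    ext i
    by_cases hi : i = 0 <;> simp [hvec, hi]
  have h2 : (j : ℝ) • z - hvec n = (j : ℝ) • (z - (1 / (j:ℝ)) • hvec n) := by
    rw [smul_sub, smul_smul, mul_one_div_cancel hj'.ne', one_smul]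
  rw [hawSphere, Metric.mem_sphere, dist_eq_norm, h1, h2, norm_smul, Real.norm_eq_abs,
    abs_of_pos hj', eq_div_iff hj'.ne', mul_comm]

lemma haw_param {n j : ℕ} (hj : 1 ≤ j) {u : EuclideanSpace ℝ (Fin (n+1))} (hu : ‖u‖ = 1) :
    (1 / (j:ℝ)) • (hvec n + u) ∈ hawSphere n j := by
  have hj' : (0 : ℝ) < j := by exact_mod_cast hj
  rw [mem_haw_iff hj, smul_smul, mul_one_div_cancel hj'.ne', one_smul, add_sub_cancel_left, hu]

lemma haw_eq {n j : ℕ} (hj : 1 ≤ j) {z : EuclideanSpace ℝ (Fin (n+1))}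
    (hz : z ∈ hawSphere n j) : (j : ℝ) * ‖z‖ ^ 2 = 2 * z 0 := by
  have hj' : (0 : ℝ) < j := by exact_mod_cast hj
  rw [mem_haw_iff hj] at hz
  have h := norm_sub_sq_real ((j : ℝ) • z) (hvec n)
  rw [hz, norm_hvec, norm_smul, real_inner_smul_left, hvec, EuclideanSpace.inner_single_right] at h
  simp at h
  have : (j:ℝ) * ((j : ℝ) * ‖z‖ ^ 2) = j * (2 * z 0) := by nlinarith
  exact mul_left_cancel₀ hj'.ne' this

lemma haw_unique {n j k : ℕ} (hj : 1 ≤ j) (hk : 1 ≤ k) {z : EuclideanSpace ℝ (Fin (n+1))}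
    (hzj : z ∈ hawSphere n j) (hzk : z ∈ hawSphere n k) (hz : z ≠ 0) : j = k := by
  have h1 := haw_eq hj hzj
  have h2 := haw_eq hk hzk
  have h3 : ‖z‖ ^ 2 ≠ 0 := by simpa using hz
  have : (j : ℝ) = k := mul_right_cancel₀ h3 (h1.trans h2.symm)
  exact_mod_cast this

lemma isClosed_haw (n j : ℕ) : IsClosed (hawSphere n j) := Metric.isClosed_sphere

lemma haw_norm_le {n j : ℕ} {z : EuclideanSpace ℝ (Fin (n+1))}
    (hz : z ∈ hawSphere n j) : ‖z‖ ≤ 2 / j := by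
  rw [hawSphere, Metric.mem_sphere, dist_eq_norm] at hz
  have h2 : ‖EuclideanSpace.single (0 : Fin (n+1)) ((1 : ℝ)/j)‖ = 1/j := by
    rw [EuclideanSpace.norm_single, Real.norm_eq_abs,
      abs_of_nonneg (one_div_nonneg.mpr (Nat.cast_nonneg j))]
  have := norm_le_norm_sub_add z (EuclideanSpace.single (0 : Fin (n+1)) ((1 : ℝ)/j))
  rw [hz, h2] at this
  calc ‖z‖ ≤ _ := this
    _ = 2 / j := by ring

lemma mem_Ysub {n k : ℕ} {z : EuclideanSpace ℝ (Fin (n+1))} :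
    z ∈ Ysub n k ↔ ∃ j ∈ Finset.Icc 1 k, z ∈ hawSphere n j := by
  simp [Ysub]

lemma mem_hawaiian {n : ℕ} {z : EuclideanSpace ℝ (Fin (n+1))} :
    z ∈ hawaiian n ↔ ∃ j, 1 ≤ j ∧ z ∈ hawSphere n j := by
  simp [hawaiian]

lemma glue {T F : Type*} [TopologicalSpace T] [TopologicalSpace F] {n k : ℕ}
    (z : T → EuclideanSpace ℝ (Fin (n+1))) (hz : Continuous z) (hzk : ∀ x, z x ∈ Ysub n k)
    (h : ℕ → T → F)
    (hc : ∀ j ∈ Finset.Icc 1 k, ContinuousOn (h j) {x | z x ∈ hawSphere n j})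
    (h0 : ∀ i ∈ Finset.Icc 1 k, ∀ j ∈ Finset.Icc 1 k, ∀ x, z x = 0 → h i x = h j x) :
    ∃ G : T → F, Continuous G ∧
      ∀ j ∈ Finset.Icc 1 k, ∀ x, z x ∈ hawSphere n j → G x = h j x := by
  choose l hl hl' using fun x => mem_Ysub.1 (hzk x)
  have key : ∀ j ∈ Finset.Icc 1 k, ∀ x, z x ∈ hawSphere n j → h (l x) x = h j x := by
    intro j hj x hx
    by_cases hx0 : z x = 0
    · exact h0 _ (hl x) _ hj x hx0
    · rw [haw_unique (Finset.mem_Icc.1 (hl x)).1 (Finset.mem_Icc.1 hj).1 (hl' x) hx hx0]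
  refine ⟨fun x => h (l x) x, ?_, key⟩
  refine LocallyFinite.continuous
    (f := fun j : Finset.Icc 1 k => {x | z x ∈ hawSphere n j}) (locallyFinite_of_finite _) ?_ ?_ ?_
  · refine Set.eq_univ_of_forall fun x => Set.mem_iUnion.2 ⟨⟨l x, hl x⟩, hl' x⟩
  · intro j; exact (isClosed_haw n j).preimage hz
  · intro j
    exact (hc j j.2).congr fun x hx => key j j.2 x hx

/-- Gluing of sphere-valued maps given by normalising vectors. -/
lemma glueDir {T : Type*} [TopologicalSpace T] {n k : ℕ}
    (z : T → EuclideanSpace ℝ (Fin (n+1))) (hz : Continuous z) (hzk : ∀ x, z x ∈ Ysub n k)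
    (w : ℕ → T → EuclideanSpace ℝ (Fin (n+1)))
    (hc : ∀ j ∈ Finset.Icc 1 k, Continuous (w j))
    (hne : ∀ j ∈ Finset.Icc 1 k, ∀ x, z x ∈ hawSphere n j → w j x ≠ 0)
    (h0 : ∀ j ∈ Finset.Icc 1 k, ∀ x, z x = 0 → w j x = - hvec n) :
    ∃ G : T → EuclideanSpace ℝ (Fin (n+1)), Continuous G ∧
      (∀ j ∈ Finset.Icc 1 k, ∀ x, z x ∈ hawSphere n j →
        G x = (1 / (j:ℝ)) • (hvec n + ‖w j x‖⁻¹ • w j x)) ∧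
      (∀ j ∈ Finset.Icc 1 k, ∀ x, z x ∈ hawSphere n j → G x ∈ hawSphere n j) := by
  have hA : ∀ j ∈ Finset.Icc 1 k, ContinuousOn
      (fun x => (1 / (j:ℝ)) • (hvec n + ‖w j x‖⁻¹ • w j x)) {x | z x ∈ hawSphere n j} := by
    intro j hj
    have h1 := (hc j hj).continuousOn (s := {x | z x ∈ hawSphere n j})
    refine ContinuousOn.const_smul (c := 1 / (j:ℝ)) (ContinuousOn.add continuousOn_const
      ((h1.norm.inv₀ ?_).smul h1))
    intro x hx
    simpa using hne j hj x hx
  have hB : ∀ i ∈ Finset.Icc 1 k, ∀ j ∈ Finset.Icc 1 k, ∀ x, z x = 0 →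
      (1 / (i:ℝ)) • (hvec n + ‖w i x‖⁻¹ • w i x)
        = (1 / (j:ℝ)) • (hvec n + ‖w j x‖⁻¹ • w j x) := by
    intro i hi j hj x hx
    simp [h0 i hi x hx, h0 j hj x hx, norm_hvec]
  obtain ⟨G, hG, hG'⟩ := glue z hz hzk
    (fun j x => (1 / (j:ℝ)) • (hvec n + ‖w j x‖⁻¹ • w j x)) hA hB
  refine ⟨G, hG, hG', fun j hj x hx => ?_⟩
  rw [hG' j hj x hx]
  refine haw_param (Finset.mem_Icc.1 hj).1 ?_
  rw [norm_smul, norm_inv, norm_norm, inv_mul_cancel₀]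
  simpa using hne j hj x hx

/-- Pushing along a generic smooth approximation: after a homotopy, the preimages of the poles
of the first `k` spheres and of the last sphere have disjoint projections. -/
lemma stage1 (m k : ℕ) (f : (Fin (m+2) → I) → EuclideanSpace ℝ (Fin (m+3)))
    (hf : Continuous f) (hfk : ∀ x, f x ∈ Ysub (m+2) (k+1)) :
    ∃ F : I × (Fin (m+2) → I) → EuclideanSpace ℝ (Fin (m+3)), Continuous F ∧
      (∀ j ∈ Finset.Icc 1 (k+1), ∀ s x, f x ∈ hawSphere (m+2) j → F (s, x) ∈ hawSphere (m+2) j) ∧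
      (∀ x, F (0, x) = f x) ∧ (∀ s x, f x = 0 → F (s, x) = 0) ∧
      (∀ x y, (∀ l, l ≠ 0 → x l = y l) →
        (∃ j ∈ Finset.Icc 1 k, F (1, x) = (2 / (j:ℝ)) • hvec (m+2)) →
        F (1, y) = (2 / ((k+1 : ℕ):ℝ)) • hvec (m+2) → False) := by
  set e := hvec (m+2) with he
  have hne : ‖e‖ = 1 := norm_hvec _
  -- the fold map
  obtain ⟨U, hU, hU'⟩ := glue f hf hfk (fun j x => (j:ℝ) • f x - e)
    (fun j _ => (by fun_prop : Continuous fun x => (j:ℝ) • f x - e).continuousOn)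
    (fun i _ j _ x hx => by simp [hx])
  -- the extension and smooth approximation
  have hV : Continuous fun y : Fin (m+2) → ℝ =>
      U (fun l => Set.projIcc (0:ℝ) 1 zero_le_one (y l)) :=
    hU.comp (continuous_pi fun l => continuous_projIcc.comp (continuous_apply l))
  obtain ⟨G, hG, hGV, -⟩ := hV.exists_contDiff_approx 1 (ε := fun _ => 1/8) continuous_const
    (fun _ => by norm_num)
  have hGU : ∀ x : Fin (m+2) → I, ‖G (fun l => (x l : ℝ)) - U x‖ < 1/8 := by
    intro x
    have := hGV (fun l => (x l : ℝ))
    simpa [dist_eq_norm] using this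
  -- generic translations
  let P : (Fin (m+2) → ℝ) × ℝ × ℝ × ℝ →
      EuclideanSpace ℝ (Fin (m+3)) × EuclideanSpace ℝ (Fin (m+3)) := fun q =>
    (G q.1 - q.2.2.1 • e, G (q.1 + q.2.1 • Pi.single (0 : Fin (m+2)) (1:ℝ)) - q.2.2.2 • e)
  have hP : ContDiff ℝ 1 P := by
    refine ContDiff.prodMk ?_ ?_
    · exact (hG.comp contDiff_fst).sub (by fun_prop)
    · exact (hG.comp (by fun_prop)).sub (by fun_prop)
  have hdense := hP.dense_compl_range_of_finrank_lt_finrank (by simp; omega)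
  obtain ⟨⟨a, b⟩, hab, hab'⟩ := hdense.exists_mem_open
    (Metric.isOpen_ball (x := ((0 : EuclideanSpace ℝ (Fin (m+3))),
      (0 : EuclideanSpace ℝ (Fin (m+3))))) (ε := 1/8))
    ⟨(0,0), Metric.mem_ball_self (by norm_num)⟩
  have ha : ‖a‖ < 1/8 ∧ ‖b‖ < 1/8 := by
    simpa [Prod.dist_eq] using hab'
  let c : ℕ → EuclideanSpace ℝ (Fin (m+3)) := fun j => if j = k+1 then b else a
  have hcn : ∀ j, ‖c j‖ < 1/8 := by
    intro j; simp only [c]; split_ifs; exacts [ha.2, ha.1]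
  let lam : ℝ → ℝ := fun t => max 0 (min 1 (2 * t))
  have hlam : Continuous lam := by fun_prop
  have hlam0 : ∀ t, 0 ≤ lam t := fun t => le_max_left _ _
  have hlam1 : ∀ t, lam t ≤ 1 := fun t => max_le zero_le_one (min_le_left _ _)
  let w : ℕ → I × (Fin (m+2) → I) → EuclideanSpace ℝ (Fin (m+3)) := fun j p =>
    ((j:ℝ) • f p.2 - e) + ((p.1 : ℝ) * lam (((j:ℝ) • f p.2 - e) 0)) •
      ((G (fun l => (p.2 l : ℝ)) - c j) - ((j:ℝ) • f p.2 - e))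
  have hGc : Continuous G := hG.continuous
  have hwc : ∀ j, Continuous (w j) := by
    intro j
    have h1 : Continuous fun p : I × (Fin (m+2) → I) => (j:ℝ) • f p.2 - e := by fun_prop
    have h2 : Continuous fun p : I × (Fin (m+2) → I) => G (fun l => (p.2 l : ℝ)) :=
      hGc.comp (by fun_prop)
    have h3 : Continuous fun p : I × (Fin (m+2) → I) => lam (((j:ℝ) • f p.2 - e) 0) :=
      hlam.comp (by fun_prop)
    exact h1.add (((continuous_subtype_val.comp continuous_fst).mul h3).smul
      ((h2.sub continuous_const).sub h1))
  have hclose : ∀ j ∈ Finset.Icc 1 (k+1), ∀ x, f x ∈ hawSphere (m+2) j →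
      ‖(G (fun l => (x l : ℝ)) - c j) - ((j:ℝ) • f x - e)‖ < 1/4 := by
    intro j hj x hx
    rw [← hU' j hj x hx]
    calc _ = ‖(G (fun l => (x l : ℝ)) - U x) - c j‖ := by congr 1; abel
      _ ≤ ‖G (fun l => (x l : ℝ)) - U x‖ + ‖c j‖ := norm_sub_le _ _
      _ < 1/4 := by linarith [hGU x, hcn j]
  have hwclose : ∀ j ∈ Finset.Icc 1 (k+1), ∀ p : I × (Fin (m+2) → I), f p.2 ∈ hawSphere (m+2) j →
      ‖w j p - ((j:ℝ) • f p.2 - e)‖ < 1/4 := by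
    intro j hj p hx
    simp only [w, add_sub_cancel_left]
    rw [norm_smul, norm_mul, Real.norm_eq_abs, Real.norm_eq_abs, abs_of_nonneg p.1.2.1,
      abs_of_nonneg (hlam0 _)]
    have h1 : (p.1 : ℝ) * lam (((j:ℝ) • f p.2 - e) 0) ≤ 1 :=
      mul_le_one₀ p.1.2.2 (hlam0 _) (hlam1 _)
    have h2 := hclose j hj p.2 hx
    exact lt_of_le_of_lt (mul_le_of_le_one_left (norm_nonneg _) h1) h2
  have hwnorm : ∀ j ∈ Finset.Icc 1 (k+1), ∀ p : I × (Fin (m+2) → I), f p.2 ∈ hawSphere (m+2) j →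
      3/4 < ‖w j p‖ := by
    intro j hj p hx
    have h1 := (mem_haw_iff (Finset.mem_Icc.1 hj).1 _).1 hx
    have h2 := norm_sub_norm_le ((j:ℝ) • f p.2 - e) (w j p)
    rw [norm_sub_rev ((j:ℝ) • f p.2 - e) (w j p)] at h2
    have h3 := hwclose j hj p hx
    rw [← he] at h1
    linarith
  obtain ⟨F, hF, hF1, hF2⟩ := glueDir (fun p : I × (Fin (m+2) → I) => f p.2) (by fun_prop)
    (fun p => hfk p.2) w (fun j _ => hwc j)
    (fun j hj p hx h => by
      have := hwnorm j hj p hx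
      rw [h, norm_zero] at this; linarith)
    (fun j hj p hx => by
      have : lam (-1) = 0 := by simp only [lam]; norm_num
      have hx : f p.2 = 0 := hx
      simp [w, hx, he, hvec_zero, this])
  -- the pole condition forces `G` to be on the axis
  have hpole : ∀ j ∈ Finset.Icc 1 (k+1), ∀ x, F (1, x) = (2 / (j:ℝ)) • e →
      ∃ r : ℝ, G (fun l => (x l : ℝ)) - r • e = c j := by
    intro j hj x hx
    have hj1 := (Finset.mem_Icc.1 hj).1
    have hj' : (0 : ℝ) < j := by exact_mod_cast hj1
    have hFx : F (1, x) ≠ 0 := by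
      rw [hx]
      refine smul_ne_zero (by positivity) ?_
      rw [← norm_ne_zero_iff, hne]; norm_num
    have hFj : F (1, x) ∈ hawSphere (m+2) j := by
      rw [hx]
      convert haw_param (n := m+2) hj1 (norm_hvec (m+2)) using 1
      rw [← he, ← two_smul ℝ e, smul_smul]; congr 1; ring
    obtain ⟨j', hj2, hfx⟩ := mem_Ysub.1 (hfk x)
    have hjj : j' = j := haw_unique (Finset.mem_Icc.1 hj2).1 hj1 (hF2 j' hj2 (1, x) hfx) hFj hFx
    subst hjj
    have h1 := hF1 j' hj (1, x) hfx
    have hw := hwnorm j' hj (1, x) hfx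
    have hwcl := hwclose j' hj (1, x) hfx
    rw [hx] at h1
    have h2 : w j' (1, x) = ‖w j' (1, x)‖ • e := by
      have h3 : (j' : ℝ) • (2 / (j':ℝ)) • e = (j' : ℝ) • ((1 / (j':ℝ)) •
        (e + ‖w j' (1, x)‖⁻¹ • w j' (1, x))) := by rw [h1]
      rw [smul_smul, smul_smul, mul_div_cancel₀ _ hj'.ne', mul_one_div_cancel hj'.ne', one_smul,
        two_smul] at h3
      have h4 := add_left_cancel h3
      rw [h4, smul_smul, mul_inv_cancel₀ (by linarith), one_smul]
    have h5 : w j' (1, x) 0 = ‖w j' (1, x)‖ := by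
      conv_lhs => rw [h2]
      simp [he, hvec_zero]
    have h6 : (w j' (1, x) - ((j':ℝ) • f x - e)) 0 < 1/4 := by
      refine lt_of_le_of_lt (le_trans (le_abs_self _) ?_) hwcl
      exact PiLp.norm_apply_le (w j' (1, x) - ((j':ℝ) • f x - e)) 0
    have h7 : 1/2 < ((j':ℝ) • f x - e) 0 := by
      have : (w j' (1, x) - ((j':ℝ) • f x - e)) 0
        = w j' (1, x) 0 - ((j':ℝ) • f x - e) 0 := rfl
      linarith
    have h8 : lam (((j':ℝ) • f x - e) 0) = 1 := by
      simp only [lam]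
      rw [min_eq_left (by linarith), max_eq_right zero_le_one]
    have h9 : w j' (1, x) = G (fun l => (x l : ℝ)) - c j' := by
      simp only [w]
      rw [h8]; simp
    refine ⟨‖w j' (1, x)‖, ?_⟩
    rw [← h2, h9]; abel
  refine ⟨F, hF, fun j hj s x hx => hF2 j hj (s, x) hx, ?_, ?_, ?_⟩
  · intro x
    obtain ⟨j, hj, hx⟩ := mem_Ysub.1 (hfk x)
    have hj' : (0 : ℝ) < j := by exact_mod_cast (Finset.mem_Icc.1 hj).1
    have h1 := (mem_haw_iff (Finset.mem_Icc.1 hj).1 _).1 hx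
    have h2 : w j (0, x) = (j:ℝ) • f x - e := by simp [w]
    rw [hF1 j hj (0, x) hx, h2, ← he] 
    rw [← he] at h1
    rw [h1, inv_one, one_smul, add_sub_cancel, smul_smul, one_div_mul_cancel hj'.ne', one_smul]
  · intro s x hx
    have h1 : (1:ℕ) ∈ Finset.Icc 1 (k+1) := by simp
    have h2 : w 1 (s, x) = - e := by
      have : lam (-1) = 0 := by simp only [lam]; norm_num
      simp [w, hx, he, hvec_zero, this]
    rw [hF1 1 h1 (s, x) (by simp only [hx]; exact zero_mem_hawSphere _ _), h2, norm_neg, hne]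
    simp [he]
  · rintro x y hxy ⟨j, hj, hx⟩ hy
    have hj0 := Finset.mem_Icc.1 hj
    obtain ⟨r, hr⟩ := hpole j (Finset.mem_Icc.2 ⟨hj0.1, by omega⟩) x hx
    obtain ⟨r', hr'⟩ := hpole (k+1) (by simp) y hy
    apply hab
    refine ⟨(fun l => (x l : ℝ), (y 0 : ℝ) - x 0, r, r'), ?_⟩
    have hca : c j = a := by simp only [c]; rw [if_neg (by omega)]
    have hcb : c (k+1) = b := by simp [c]
    rw [hca] at hr
    rw [hcb] at hr'
    simp only [P]
    refine Prod.ext hr ?_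
    simp only
    rw [← hr']
    congr 2
    ext l
    by_cases hl : l = 0
    · subst hl; simp
    · simp [hl, hxy l hl]

lemma pole_ne_zero {n j : ℕ} (hj : 1 ≤ j) : (2 / (j:ℝ)) • hvec n ≠ 0 := by
  have hj' : (0 : ℝ) < j := by exact_mod_cast hj
  refine smul_ne_zero (by positivity) ?_
  rw [← norm_ne_zero_iff, norm_hvec]; norm_num

/-- Contracting away from the poles on both sides of a separating graph. -/
lemma stage2 (m k : ℕ) (hk : 1 ≤ k) (f : (Fin (m+2) → I) → EuclideanSpace ℝ (Fin (m+3)))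
    (hf : Continuous f) (hfk : ∀ x, f x ∈ Ysub (m+2) (k+1))
    (hbd : ∀ x ∈ Cube.boundary (Fin (m+2)), f x = 0)
    (hp : ∀ x y, (∀ l, l ≠ 0 → x l = y l) →
        (∃ j ∈ Finset.Icc 1 k, f x = (2 / (j:ℝ)) • hvec (m+2)) →
        f y = (2 / ((k+1 : ℕ):ℝ)) • hvec (m+2) → False) :
    ∃ F : I × (Fin (m+2) → I) → EuclideanSpace ℝ (Fin (m+3)), Continuous F ∧
      (∀ p, F p ∈ Ysub (m+2) (k+1)) ∧
      (∀ x, F (0, x) = f x) ∧ (∀ s x, f x = 0 → F (s, x) = 0) ∧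
      ∃ φ : (Fin (m+2) → I) → I, Continuous φ ∧
        (∀ x y, (∀ l, l ≠ 0 → x l = y l) → φ x = φ y) ∧
        (∀ x, x 0 ≤ φ x → F (1, x) ∈ Ysub (m+2) k) ∧
        (∀ x, φ x ≤ x 0 → F (1, x) ∈ hawSphere (m+2) (k+1)) ∧
        (∀ x, φ x = x 0 → F (1, x) = 0) := by
  set e := hvec (m+2) with he
  have hne : ‖e‖ = 1 := norm_hvec _
  let A : Set (Fin (m+2) → I) := {x | ∃ j ∈ Finset.Icc 1 k, f x = (2 / (j:ℝ)) • e}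
  let B : Set (Fin (m+2) → I) := {x | f x = (2 / ((k+1 : ℕ):ℝ)) • e}
  have hA : IsClosed A := by
    have : A = ⋃ j ∈ Finset.Icc 1 k, {x | f x = (2 / (j:ℝ)) • e} := by
      ext x; simp [A]
    rw [this]
    exact isClosed_biUnion_finset fun j _ => isClosed_eq hf continuous_const
  have hB : IsClosed B := isClosed_eq hf continuous_const
  let pr : (Fin (m+2) → I) → (Fin (m+2) → I) := fun x => Function.update x 0 0
  have hpr : Continuous pr := continuous_id.update 0 continuous_const
  have hprA : IsClosed (pr '' A) := (hA.isCompact.image hpr).isClosed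
  have hprB : IsClosed (pr '' B) := (hB.isCompact.image hpr).isClosed
  have hdisj : Disjoint (pr '' B) (pr '' A) := by
    rw [Set.disjoint_left]
    rintro _ ⟨y, hy, rfl⟩ ⟨x, hx, hxy⟩
    refine hp x y (fun l hl => ?_) hx hy
    have := congrFun hxy l
    simpa [pr, hl] using this
  obtain ⟨ψ, hψ0, hψ1, hψ⟩ := exists_continuous_zero_one_of_isClosed hprB hprA hdisj
  let φ : (Fin (m+2) → I) → I := fun x => ⟨ψ (pr x), hψ _⟩
  have hφ : Continuous φ := by
    refine Continuous.subtype_mk (ψ.continuous.comp hpr) _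
  have hφA : ∀ x ∈ A, φ x = 1 := fun x hx => Subtype.ext (hψ1 ⟨x, hx, rfl⟩)
  have hφB : ∀ x ∈ B, φ x = 0 := fun x hx => Subtype.ext (hψ0 ⟨x, hx, rfl⟩)
  have hCA : IsClosed {x : Fin (m+2) → I | φ x ≤ x 0} := isClosed_le hφ (continuous_apply 0)
  have hCB : IsClosed {x : Fin (m+2) → I | x 0 ≤ φ x} := isClosed_le (continuous_apply 0) hφ
  have hdA : Disjoint A {x : Fin (m+2) → I | φ x ≤ x 0} := by
    rw [Set.disjoint_left]
    intro x hx hx2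
    simp only [Set.mem_setOf_eq, hφA x hx] at hx2
    have h1 : x 0 = 1 := le_antisymm unitInterval.le_one' hx2
    have h2 := hbd x ⟨0, Or.inr h1⟩
    obtain ⟨j, hj, hx⟩ := hx
    exact pole_ne_zero (Finset.mem_Icc.1 hj).1 (hx.symm.trans h2)
  have hdB : Disjoint B {x : Fin (m+2) → I | x 0 ≤ φ x} := by
    rw [Set.disjoint_left]
    intro x hx hx2
    simp only [Set.mem_setOf_eq, hφB x hx] at hx2
    have h1 : x 0 = 0 := le_antisymm hx2 unitInterval.nonneg'
    have h2 := hbd x ⟨0, Or.inl h1⟩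
    exact pole_ne_zero (by omega) (hx.symm.trans h2)
  obtain ⟨μA, hμA0, hμA1, hμA⟩ := exists_continuous_zero_one_of_isClosed hA hCA hdA
  obtain ⟨μB, hμB0, hμB1, hμB⟩ := exists_continuous_zero_one_of_isClosed hB hCB hdB
  let μ : ℕ → C(Fin (m+2) → I, ℝ) := fun j => if j = k+1 then μB else μA
  have hμ01 : ∀ j x, μ j x ∈ Set.Icc (0:ℝ) 1 := by
    intro j x; simp only [μ]; split_ifs; exacts [hμB x, hμA x]
  have hμpole : ∀ j ∈ Finset.Icc 1 (k+1), ∀ x, f x = (2 / (j:ℝ)) • e → μ j x = 0 := by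
    intro j hj x hx
    have hj0 := Finset.mem_Icc.1 hj
    simp only [μ]; split_ifs with h
    · subst h; exact hμB0 hx
    · exact hμA0 ⟨j, Finset.mem_Icc.2 ⟨hj0.1, by omega⟩, hx⟩
  let w : ℕ → I × (Fin (m+2) → I) → EuclideanSpace ℝ (Fin (m+3)) := fun j p =>
    (1 - (p.1 : ℝ) * μ j p.2) • ((j:ℝ) • f p.2 - e) - ((p.1 : ℝ) * μ j p.2) • e
  have hwc : ∀ j, Continuous (w j) := by
    intro j
    have h1 : Continuous fun p : I × (Fin (m+2) → I) => (j:ℝ) • f p.2 - e := by fun_prop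
    have h3 : Continuous fun p : I × (Fin (m+2) → I) => (p.1 : ℝ) * μ j p.2 := by fun_prop
    exact ((continuous_const.sub h3).smul h1).sub (h3.smul continuous_const)
  have hwne : ∀ j ∈ Finset.Icc 1 (k+1), ∀ p : I × (Fin (m+2) → I), f p.2 ∈ hawSphere (m+2) j →
      w j p ≠ 0 := by
    intro j hj p hx h0
    have hj1 := (Finset.mem_Icc.1 hj).1
    have hj' : (0 : ℝ) < j := by exact_mod_cast hj1
    have h1 := (mem_haw_iff hj1 _).1 hx
    rw [← he] at h1
    set sg := (p.1 : ℝ) * μ j p.2 with hsg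
    have hsg0 : 0 ≤ sg := mul_nonneg p.1.2.1 (hμ01 j p.2).1
    have hsg1 : sg ≤ 1 := mul_le_one₀ p.1.2.2 (hμ01 j p.2).1 (hμ01 j p.2).2
    have h2 : (1 - sg) • ((j:ℝ) • f p.2 - e) = sg • e := sub_eq_zero.1 h0
    have h3 := congrArg norm h2
    rw [norm_smul, norm_smul, h1, hne, Real.norm_eq_abs, Real.norm_eq_abs, abs_of_nonneg hsg0,
      abs_of_nonneg (by linarith)] at h3
    have h4 : sg = 1/2 := by linarith
    rw [h4] at h2
    have h5 : (j:ℝ) • f p.2 - e = e := by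
      have := congrArg (fun v => (2:ℝ) • v) h2
      simp only [smul_smul] at this
      norm_num at this
      exact this
    have h6 : f p.2 = (2 / (j:ℝ)) • e := by
      have h7 : (j:ℝ) • f p.2 = (2:ℝ) • e := by rw [two_smul]; exact sub_eq_iff_eq_add.1 h5
      rw [div_eq_inv_mul, ← smul_smul, ← h7, smul_smul, inv_mul_cancel₀ hj'.ne', one_smul]
    have := hμpole j hj p.2 h6
    rw [this, mul_zero] at hsg
    linarith
  have hw0 : ∀ j, ∀ p : I × (Fin (m+2) → I), f p.2 = 0 → w j p = -e := by
    intro j p hx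
    simp only [w, hx, smul_zero, zero_sub, smul_neg, sub_smul, one_smul]
    abel
  obtain ⟨F, hF, hF1, hF2⟩ := glueDir (fun p : I × (Fin (m+2) → I) => f p.2) (by fun_prop)
    (fun p => hfk p.2) w (fun j _ => hwc j) hwne (fun j hj p hx => hw0 j p hx)
  have hz : ∀ j ∈ Finset.Icc 1 (k+1), ∀ p : I × (Fin (m+2) → I), f p.2 ∈ hawSphere (m+2) j →
      w j p = -e → F p = 0 := by
    intro j hj p hx hw
    rw [hF1 j hj p hx, hw, norm_neg, hne]
    simp [he]
  have hz1 : ∀ j ∈ Finset.Icc 1 (k+1), ∀ x, f x ∈ hawSphere (m+2) j → μ j x = 1 →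
      F (1, x) = 0 := by
    intro j hj x hx hm
    refine hz j hj (1, x) hx ?_
    simp [w, hm]
  have hmA : ∀ j ∈ Finset.Icc 1 (k+1), j ≠ k+1 → ∀ x, φ x ≤ x 0 → μ j x = 1 := by
    intro j hj hjk x hx
    simp only [μ]; rw [if_neg hjk]; exact hμA1 hx
  have hmB : ∀ x, x 0 ≤ φ x → μ (k+1) x = 1 := by
    intro x hx
    simp only [μ, if_true]; exact hμB1 hx
  refine ⟨F, hF, ?_, ?_, ?_, φ, hφ, ?_, ?_, ?_, ?_⟩
  · intro p
    obtain ⟨j, hj, hx⟩ := mem_Ysub.1 (hfk p.2)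
    exact mem_Ysub.2 ⟨j, hj, hF2 j hj p hx⟩
  · intro x
    obtain ⟨j, hj, hx⟩ := mem_Ysub.1 (hfk x)
    have hj' : (0 : ℝ) < j := by exact_mod_cast (Finset.mem_Icc.1 hj).1
    have h1 := (mem_haw_iff (Finset.mem_Icc.1 hj).1 _).1 hx
    have h2 : w j (0, x) = (j:ℝ) • f x - e := by simp [w]
    rw [hF1 j hj (0, x) hx, h2, ← he]
    rw [← he] at h1
    rw [h1, inv_one, one_smul, add_sub_cancel, smul_smul, one_div_mul_cancel hj'.ne', one_smul]
  · intro s x hx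
    refine hz 1 (by simp) (s, x) ?_ (hw0 1 (s, x) hx)
    simp only [hx]; exact zero_mem_hawSphere _ _
  · intro x y hxy
    have : pr x = pr y := by
      ext l
      by_cases hl : l = 0
      · simp [pr, hl]
      · simp [pr, hl, hxy l hl]
    simp only [φ, this]
  · intro x hx
    obtain ⟨j, hj, hfx⟩ := mem_Ysub.1 (hfk x)
    by_cases hjk : j = k+1
    · subst hjk
      rw [hz1 _ hj x hfx (hmB x hx)]
      exact mem_Ysub.2 ⟨1, by simp [hk], zero_mem_hawSphere _ _⟩
    · have hj0 := Finset.mem_Icc.1 hj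
      exact mem_Ysub.2 ⟨j, Finset.mem_Icc.2 ⟨hj0.1, by omega⟩, hF2 j hj (1, x) hfx⟩
  · intro x hx
    obtain ⟨j, hj, hfx⟩ := mem_Ysub.1 (hfk x)
    by_cases hjk : j = k+1
    · subst hjk
      exact hF2 _ hj (1, x) hfx
    · rw [hz1 j hj x hfx (hmA j hj hjk x hx)]
      exact zero_mem_hawSphere _ _
  · intro x hx
    obtain ⟨j, hj, hfx⟩ := mem_Ysub.1 (hfk x)
    by_cases hjk : j = k+1
    · subst hjk
      exact hz1 _ hj x hfx (hmB x hx.ge)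
    · exact hz1 j hj x hfx (hmA j hj hjk x hx.le)

section LoopAlgebra

variable {N X Y : Type*} [TopologicalSpace X] [TopologicalSpace Y] {x : X} {y : Y}
  [DecidableEq N] [Nonempty N]

lemma transAt_congr (i : N) {a a' b b' : Ω^ N X x} (ha : GenLoop.Homotopic a a')
    (hb : GenLoop.Homotopic b b') :
    GenLoop.Homotopic (GenLoop.transAt i a b) (GenLoop.transAt i a' b') := by
  have h1 := HomotopyGroup.mul_spec (i := i) (p := b) (q := a)
  have h2 := HomotopyGroup.mul_spec (i := i) (p := b') (q := a')
  have h3 : (⟦a⟧ : HomotopyGroup N X x) = ⟦a'⟧ := Quotient.sound ha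
  have h4 : (⟦b⟧ : HomotopyGroup N X x) = ⟦b'⟧ := Quotient.sound hb
  rw [h3, h4] at h1
  exact Quotient.exact (h1.symm.trans h2)

lemma transAt_const (i : N) (a : Ω^ N X x) :
    GenLoop.Homotopic (GenLoop.transAt i a GenLoop.const) a := by
  have h1 := HomotopyGroup.mul_spec (i := i) (p := GenLoop.const) (q := a)
  have h2 := one_mul (M := HomotopyGroup N X x) ⟦a⟧
  exact Quotient.exact (h1.symm.trans h2)

lemma transAt_assoc (i : N) (a b c : Ω^ N X x) :
    GenLoop.Homotopic (GenLoop.transAt i a (GenLoop.transAt i b c))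
      (GenLoop.transAt i (GenLoop.transAt i a b) c) := by
  have h1 := HomotopyGroup.mul_spec (i := i) (p := GenLoop.transAt i b c) (q := a)
  have h2 := HomotopyGroup.mul_spec (i := i) (p := c) (q := b)
  have h3 := HomotopyGroup.mul_spec (i := i) (p := c) (q := GenLoop.transAt i a b)
  have h4 := HomotopyGroup.mul_spec (i := i) (p := b) (q := a)
  have h5 := mul_assoc (G := HomotopyGroup N X x) ⟦c⟧ ⟦b⟧ ⟦a⟧
  rw [← h2] at h1
  rw [← h4] at h3
  exact Quotient.exact (h1.symm.trans (h5.trans h3))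

lemma transAt_apply (i : N) (a b : Ω^ N X x) (t : N → I) :
    GenLoop.transAt i a b t = if (t i : ℝ) ≤ 1 / 2
      then a (Function.update t i <| Set.projIcc 0 1 zero_le_one (2 * t i))
      else b (Function.update t i <| Set.projIcc 0 1 zero_le_one (2 * t i - 1)) := rfl

lemma compCM_apply (g : C(X, Y)) (hg : g x = y) (p : Ω^ N X x) (t : N → I) :
    GenLoop.compCM g hg p t = g (p t) := rfl

lemma compCM_transAt (g : C(X, Y)) (hg : g x = y) (i : N) (a b : Ω^ N X x) :
    GenLoop.compCM g hg (GenLoop.transAt i a b) =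
      GenLoop.transAt i (GenLoop.compCM g hg a) (GenLoop.compCM g hg b) := by
  apply GenLoop.ext
  intro t
  rw [compCM_apply, transAt_apply, transAt_apply, apply_ite g]
  rfl

lemma compCM_congr (g : C(X, Y)) (hg : g x = y) {a b : Ω^ N X x} (h : GenLoop.Homotopic a b) :
    GenLoop.Homotopic (GenLoop.compCM g hg a) (GenLoop.compCM g hg b) :=
  h.map fun F => F.compContinuousMap g

end LoopAlgebra

lemma homotopic_of {n i : ℕ} {N : Type*} (f g : Ω^ N (Ysub n (i+1)) (YsubPt n i))
    (F : I × (N → I) → EuclideanSpace ℝ (Fin (n+1))) (hF : Continuous F)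
    (hY : ∀ p, F p ∈ Ysub n (i+1)) (h0 : ∀ x, F (0, x) = f x) (h1 : ∀ x, F (1, x) = g x)
    (hb : ∀ s, ∀ x ∈ Cube.boundary N, F (s, x) = 0) : GenLoop.Homotopic f g := by
  refine ⟨⟨⟨⟨fun p => ⟨F p, hY p⟩, hF.subtype_mk _⟩, ?_, ?_⟩, ?_⟩⟩
  · intro x; exact Subtype.ext (h0 x)
  · intro x; exact Subtype.ext (h1 x)
  · intro s x hx
    refine Subtype.ext ?_
    have h2 : f.1 x = YsubPt n i := f.2 x hx
    rw [h2]
    exact hb s x hx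

/-- Mixed reparametrisation value. -/
def rho (s t p : I) : I :=
  ⟨(1 - (s:ℝ)) * t + s * (min (2 * (t:ℝ)) 1 * p + max (2 * (t:ℝ) - 1) 0 * (1 - p)), by
    obtain ⟨s, hs0, hs1⟩ := s
    obtain ⟨t, ht0, ht1⟩ := t
    obtain ⟨p, hp0, hp1⟩ := p
    simp only
    have h1 : 0 ≤ min (2 * t) 1 * p + max (2 * t - 1) 0 * (1 - p) := by
      have : 0 ≤ min (2*t) 1 := le_min (by linarith) zero_le_one
      have h' : 0 ≤ max (2*t-1) 0 := le_max_right _ _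
      have h'' : 0 ≤ 1 - p := by linarith
      positivity
    have h2 : min (2 * t) 1 * p + max (2 * t - 1) 0 * (1 - p) ≤ 1 := by
      have h3 : min (2*t) 1 ≤ 1 := min_le_right _ _
      have h4 : max (2*t-1) 0 ≤ 1 := max_le (by linarith) zero_le_one
      nlinarith
    constructor
    · have : 0 ≤ 1 - s := by linarith
      positivity
    · nlinarith⟩

lemma rho_zero_left (t p : I) : rho 0 t p = t := by
  ext; simp [rho]

lemma rho_zero (s p : I) : rho s 0 p = 0 := by
  ext; simp [rho]

lemma rho_one (s p : I) : rho s 1 p = 1 := by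
  ext; simp only [rho]; norm_num

lemma split (m i : ℕ) (f : Ω^ (Fin (m+2)) (Ysub (m+2) (i+1+1)) (YsubPt (m+2) (i+1))) :
    ∃ a b : Ω^ (Fin (m+2)) (Ysub (m+2) (i+1+1)) (YsubPt (m+2) (i+1)),
      (∀ x, (a x : EuclideanSpace ℝ (Fin (m+3))) ∈ Ysub (m+2) (i+1)) ∧
      (∀ x, (b x : EuclideanSpace ℝ (Fin (m+3))) ∈ hawSphere (m+2) (i+1+1)) ∧
      GenLoop.Homotopic f (GenLoop.transAt 0 a b) := by
  have hf0 : ∀ x ∈ Cube.boundary (Fin (m+2)), (f x : EuclideanSpace ℝ (Fin (m+3))) = 0 :=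
    fun x hx => congrArg Subtype.val (f.2 x hx)
  obtain ⟨F, hF, hF1, hF2, hF3, hF4⟩ := stage1 m (i+1) (fun x => (f x).1)
    (continuous_subtype_val.comp f.1.continuous) (fun x => (f x).2)
  have hFY : ∀ p, F p ∈ Ysub (m+2) (i+1+1) := by
    rintro ⟨s, x⟩
    obtain ⟨j, hj, hx⟩ := mem_Ysub.1 (f x).2
    exact mem_Ysub.2 ⟨j, hj, hF1 j hj s x hx⟩
  obtain ⟨K, hK, hKY, hK0, hKz, φ, hφ, hφ1, hφ2, hφ3, hφ4⟩ := stage2 m (i+1) (by omega)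
    (fun x => F (1, x)) (by fun_prop) (fun x => hFY _) (fun x hx => hF3 1 x (hf0 x hx)) hF4
  have hKb : ∀ s, ∀ x ∈ Cube.boundary (Fin (m+2)), K (s, x) = 0 :=
    fun s x hx => hKz s x (hF3 1 x (hf0 x hx))
  -- the intermediate loops
  let f1 : Ω^ (Fin (m+2)) (Ysub (m+2) (i+1+1)) (YsubPt (m+2) (i+1)) :=
    ⟨⟨fun x => ⟨F (1, x), hFY _⟩, by fun_prop⟩, fun x hx => Subtype.ext (hF3 1 x (hf0 x hx))⟩
  let f2 : Ω^ (Fin (m+2)) (Ysub (m+2) (i+1+1)) (YsubPt (m+2) (i+1)) :=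
    ⟨⟨fun x => ⟨K (1, x), hKY _⟩, by fun_prop⟩, fun x hx => Subtype.ext (hKb 1 x hx)⟩
  have H1 : GenLoop.Homotopic f f1 := homotopic_of f f1 F hF hFY hF2 (fun x => rfl)
    (fun s x hx => hF3 s x (hf0 x hx))
  have H2 : GenLoop.Homotopic f1 f2 := homotopic_of f1 f2 K hK hKY hK0 (fun x => rfl) hKb
  have hφu : ∀ (x : Fin (m+2) → I) t, φ (Function.update x 0 t) = φ x := fun x t =>
    hφ1 _ _ fun l hl => by simp [hl]
  have hbu : ∀ (x : Fin (m+2) → I) (t : I), x ∈ Cube.boundary (Fin (m+2)) →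
      (x 0 = 0 → t = 0) → (x 0 = 1 → t = 1) →
      Function.update x 0 t ∈ Cube.boundary (Fin (m+2)) := by
    rintro x t ⟨l, hl⟩ h0 h1
    refine ⟨l, ?_⟩
    by_cases hl0 : l = 0
    · subst hl0
      simp only [Function.update_self]
      exact hl.imp h0 h1
    · simpa [hl0] using hl
  let ta : (Fin (m+2) → I) → I := fun x => x 0 * φ x
  let tb : (Fin (m+2) → I) → I := fun x => ⟨φ x + x 0 * (1 - φ x), by
    have h1 := (φ x).2
    have h2 := (x 0).2
    constructor
    · have : 0 ≤ 1 - (φ x : ℝ) := by linarith [h1.2]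
      have := h1.1
      have := h2.1
      positivity
    · nlinarith [h1.1, h1.2, h2.1, h2.2]⟩
  have hta : Continuous ta := by fun_prop
  have htb : Continuous tb := by
    refine Continuous.subtype_mk ?_ _
    fun_prop
  have huc : ∀ t : (Fin (m+2) → I) → I, Continuous t →
      Continuous fun x => K (1, Function.update x 0 (t x)) := fun t ht =>
    hK.comp (continuous_const.prodMk (continuous_id.update 0 ht))
  let a : Ω^ (Fin (m+2)) (Ysub (m+2) (i+1+1)) (YsubPt (m+2) (i+1)) :=
    ⟨⟨fun x => ⟨K (1, Function.update x 0 (ta x)), hKY _⟩, (huc ta hta).subtype_mk _⟩, by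
      intro x hx
      refine Subtype.ext ?_
      change K (1, Function.update x 0 (ta x)) = 0
      by_cases h1 : x 0 = 1
      · refine hφ4 _ ?_
        rw [hφu, Function.update_self]
        simp [ta, h1]
      · refine hKb 1 _ (hbu x _ hx (fun h0 => ?_) (fun h => absurd h h1))
        simp [ta, h0]⟩
  let b : Ω^ (Fin (m+2)) (Ysub (m+2) (i+1+1)) (YsubPt (m+2) (i+1)) :=
    ⟨⟨fun x => ⟨K (1, Function.update x 0 (tb x)), hKY _⟩, (huc tb htb).subtype_mk _⟩, by
      intro x hx
      refine Subtype.ext ?_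
      change K (1, Function.update x 0 (tb x)) = 0
      by_cases h0 : x 0 = 0
      · refine hφ4 _ ?_
        rw [hφu, Function.update_self]
        ext; simp [tb, h0]
      · refine hKb 1 _ (hbu x _ hx (fun h => absurd h h0) (fun h1 => ?_))
        ext; simp [tb, h1]⟩
  refine ⟨a, b, ?_, ?_, H1.trans (H2.trans ?_)⟩
  · intro x
    refine hφ2 _ ?_
    rw [hφu, Function.update_self]
    exact unitInterval.mul_le_right
  · intro x
    refine hφ3 _ ?_
    rw [hφu, Function.update_self]
    change (φ x : ℝ) ≤ φ x + x 0 * (1 - φ x)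
    have := mul_nonneg (x 0).2.1 (sub_nonneg.2 (φ x).2.2)
    linarith
  · refine homotopic_of f2 _
      (fun p => K (1, Function.update p.2 0 (rho p.1 (p.2 0) (φ p.2)))) ?_ (fun p => hKY _) ?_ ?_ ?_
    · have h1 : Continuous fun p : I × (Fin (m+2) → I) => rho p.1 (p.2 0) (φ p.2) := by
        refine Continuous.subtype_mk ?_ _
        fun_prop
      exact hK.comp (continuous_const.prodMk (continuous_snd.update 0 h1))
    · intro x
      simp only [rho_zero_left, Function.update_eq_self]
      rfl
    · intro x
      rw [transAt_apply]
      split_ifs with h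
      · change _ = K (1, Function.update (Function.update x 0 _) 0 (_ * _))
        rw [hφu, Function.update_self, Function.update_idem]
        congr 3
        ext
        have h2 : (Set.projIcc (0:ℝ) 1 zero_le_one (2 * (x 0 : ℝ)) : ℝ) = 2 * x 0 := by
          rw [Set.projIcc_of_mem zero_le_one ⟨by linarith [(x 0).2.1], by linarith⟩]
        simp only [rho, Set.Icc.coe_mul, h2, Set.Icc.coe_one]
        rw [min_eq_left (by linarith), max_eq_right (by linarith)]
        ring
      · change _ = K (1, Function.update (Function.update x 0 _) 0 (tb _))
        rw [Function.update_idem]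
        congr 3
        ext
        have h2 : (Set.projIcc (0:ℝ) 1 zero_le_one (2 * (x 0 : ℝ) - 1) : ℝ) = 2 * x 0 - 1 := by
          rw [Set.projIcc_of_mem zero_le_one ⟨by linarith, by linarith [(x 0).2.2]⟩]
        simp only [rho, tb, hφu, Function.update_self, h2, Set.Icc.coe_one]
        rw [min_eq_right (by linarith), max_eq_left (by linarith)]
        ring
    · intro s x hx
      refine hKb 1 _ (hbu x _ hx (fun h => ?_) (fun h => ?_))
      · simp only [h]; exact rho_zero _ _
      · simp only [h]; exact rho_one _ _

/-- Finite tails of the infinite concatenation. -/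
def Eseq {n : ℕ} {N : Type*} [DecidableEq N] (c : N)
    (b : ℕ → Ω^ N (hawaiian n) (hawaiianPt n)) : ℕ → ℕ → Ω^ N (hawaiian n) (hawaiianPt n)
  | _, 0 => GenLoop.const
  | k, j+1 => GenLoop.transAt c (b k) (Eseq c b (k+1) j)

/-- Left-associated finite concatenations. -/
def Pseq {n : ℕ} {N : Type*} [DecidableEq N] (c : N)
    (b : ℕ → Ω^ N (hawaiian n) (hawaiianPt n)) : ℕ → Ω^ N (hawaiian n) (hawaiianPt n)
  | 0 => b 0
  | j+1 => GenLoop.transAt c (Pseq c b j) (b (j+1))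

section Limit

variable {n : ℕ} {N : Type*} [DecidableEq N] [Nonempty N] (c : N)
    (b : ℕ → Ω^ N (hawaiian n) (hawaiianPt n))

lemma Eseq_Pseq (i : ℕ) : ∀ j, GenLoop.Homotopic (Eseq c b 0 (i+1+j))
    (GenLoop.transAt c (Pseq c b i) (Eseq c b (i+1) j)) := by
  induction i with
  | zero =>
    intro j
    rw [show 0 + 1 + j = j + 1 by omega]
    exact GenLoop.Homotopic.refl _
  | succ i ih =>
    intro j
    rw [show i + 1 + 1 + j = i + 1 + (j + 1) by omega]
    exact (ih (j+1)).trans (transAt_assoc c _ _ _)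

lemma Eseq_Pseq' (i : ℕ) :
    GenLoop.Homotopic (Eseq c b 0 (i+1)) (Pseq c b i) :=
  (Eseq_Pseq c b i 0).trans (transAt_const c _)

lemma Pseq_mem (hb : ∀ k x, (b k x : EuclideanSpace ℝ (Fin (n+1))) ∈ hawSphere n (k+1))
    (i : ℕ) : ∀ x, (Pseq c b i x : EuclideanSpace ℝ (Fin (n+1))) ∈ Ysub n (i+1) := by
  induction i with
  | zero =>
    intro x
    exact mem_Ysub.2 ⟨1, by simp, hb 0 x⟩
  | succ i ih =>
    intro x
    rw [Pseq, transAt_apply]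
    split_ifs
    · obtain ⟨j, hj, h⟩ := mem_Ysub.1 (ih (Function.update x c <|
        Set.projIcc 0 1 zero_le_one (2 * x c)))
      refine mem_Ysub.2 ⟨j, ?_, h⟩
      simp only [Finset.mem_Icc] at hj ⊢
      omega
    · exact mem_Ysub.2 ⟨i+2, by simp, hb (i+1) _⟩

lemma Eseq_mem (hb : ∀ k x, (b k x : EuclideanSpace ℝ (Fin (n+1))) ∈ hawSphere n (k+1))
    (j : ℕ) : ∀ k x, ∃ l, k + 1 ≤ l ∧
      (Eseq c b k j x : EuclideanSpace ℝ (Fin (n+1))) ∈ hawSphere n l := by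
  induction j with
  | zero =>
    intro k x
    exact ⟨k+1, le_rfl, zero_mem_hawSphere n _⟩
  | succ j ih =>
    intro k x
    rw [Eseq, transAt_apply]
    split_ifs
    · exact ⟨k+1, le_rfl, hb k _⟩
    · obtain ⟨l, hl, h⟩ := ih (k+1) (Function.update x c <|
        Set.projIcc 0 1 zero_le_one (2 * x c - 1))
      exact ⟨l, by omega, h⟩

lemma Eseq_compare (hb : ∀ k x, (b k x : EuclideanSpace ℝ (Fin (n+1))) ∈ hawSphere n (k+1))
    (j : ℕ) : ∀ d k x, Eseq c b k (j+d) x = Eseq c b k j x ∨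
      (Eseq c b k j x = hawaiianPt n ∧ ∃ l, k + j + 1 ≤ l ∧
        (Eseq c b k (j+d) x : EuclideanSpace ℝ (Fin (n+1))) ∈ hawSphere n l) := by
  induction j with
  | zero =>
    intro d k x
    right
    refine ⟨rfl, ?_⟩
    simpa using Eseq_mem c b hb (0+d) k x
  | succ j ih =>
    intro d k x
    rw [show j + 1 + d = (j + d) + 1 by omega, Eseq, Eseq, transAt_apply, transAt_apply]
    split_ifs
    · left; rfl
    · obtain h | ⟨h, l, hl, h'⟩ := ih d (k+1) (Function.update x c <|
        Set.projIcc 0 1 zero_le_one (2 * x c - 1))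
      · exact Or.inl h
      · exact Or.inr ⟨h, l, by omega, h'⟩

lemma exists_limit (hb : ∀ k x, (b k x : EuclideanSpace ℝ (Fin (n+1))) ∈ hawSphere n (k+1)) :
    ∃ e : Ω^ N (hawaiian n) (hawaiianPt n), ∀ j x, e x = Eseq c b 0 j x ∨
      (Eseq c b 0 j x = hawaiianPt n ∧ ∃ l, j + 1 ≤ l ∧
        (e x : EuclideanSpace ℝ (Fin (n+1))) ∈ hawSphere n l) := by
  have key : ∀ x, ∃ z : hawaiian n, ∀ j, z = Eseq c b 0 j x ∨
      (Eseq c b 0 j x = hawaiianPt n ∧ ∃ l, j + 1 ≤ l ∧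
        (z : EuclideanSpace ℝ (Fin (n+1))) ∈ hawSphere n l) := by
    intro x
    by_cases h : ∃ J, Eseq c b 0 J x ≠ hawaiianPt n
    · obtain ⟨J, hJ⟩ := h
      refine ⟨Eseq c b 0 J x, fun j => ?_⟩
      obtain ⟨d, rfl⟩ | ⟨d, rfl⟩ := (le_total j J).imp Nat.exists_eq_add_of_le
        Nat.exists_eq_add_of_le
      · simpa using Eseq_compare c b hb j d 0 x
      · obtain h | ⟨h, -⟩ := Eseq_compare c b hb J d 0 x
        · exact Or.inl h.symm
        · exact absurd h hJ
    · push Not at h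
      exact ⟨hawaiianPt n, fun j => Or.inl (h j).symm⟩
  choose e he using key
  have hd : ∀ j x, dist (Eseq c b 0 j x) (e x) ≤ 2 / ((j : ℝ) + 1) := by
    intro j x
    obtain h | ⟨h, l, hl, h'⟩ := he x j
    · rw [h, dist_self]; positivity
    · rw [h]
      have h1 := haw_norm_le h'
      change dist (0 : EuclideanSpace ℝ (Fin (n+1))) (e x : EuclideanSpace ℝ (Fin (n+1))) ≤ _
      rw [dist_zero_left]
      refine h1.trans ?_
      have : (j:ℝ) + 1 ≤ l := by exact_mod_cast hl
      gcongr
  have hcont : Continuous e := by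
    have hu : TendstoUniformly (fun j x => Eseq c b 0 j x) e Filter.atTop := by
      rw [Metric.tendstoUniformly_iff]
      intro ε hε
      have h1 : Filter.Tendsto (fun j : ℕ => 2 / ((j : ℝ) + 1)) Filter.atTop (𝓝 0) := by
        have := (tendsto_one_div_add_atTop_nhds_zero_nat (𝕜 := ℝ)).const_mul 2
        simpa [div_eq_mul_inv] using this
      filter_upwards [h1.eventually_lt_const hε] with j hj x
      rw [dist_comm]
      exact (hd j x).trans_lt hj
    exact hu.continuous (Filter.Frequently.of_forall fun j => (Eseq c b 0 j).1.continuous)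
  refine ⟨⟨⟨e, hcont⟩, ?_⟩, fun j x => he x j⟩
  intro x hx
  have h0 : ∀ j, Eseq c b 0 j x = hawaiianPt n := fun j => (Eseq c b 0 j).2 x hx
  refine dist_le_zero.1 (le_of_forall_pos_le_add fun ε hε => ?_)
  obtain ⟨j, hj⟩ := exists_nat_one_div_lt (half_pos hε)
  have := hd j x
  rw [h0, dist_comm] at this
  have h2 : 2 / ((j:ℝ)+1) = 2 * (1 / (j+1)) := by ring
  change dist (e x) (hawaiianPt n) ≤ _
  linarith

end Limit

/-- Inclusion between subsets, as a continuous map. -/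
def incCM {Z : Type*} [TopologicalSpace Z] {A B : Set Z} (h : A ⊆ B) : C(A, B) :=
  ⟨Set.inclusion h, continuous_inclusion h⟩

lemma Ysub_subset_hawaiian (n k : ℕ) : Ysub n k ⊆ hawaiian n := by
  intro z hz
  obtain ⟨j, hj, h⟩ := mem_Ysub.1 hz
  exact mem_hawaiian.2 ⟨j, (Finset.mem_Icc.1 hj).1, h⟩

lemma Ysub_subset_succ (n k : ℕ) : Ysub n k ⊆ Ysub n (k+1) := by
  intro z hz
  obtain ⟨j, hj, h⟩ := mem_Ysub.1 hz
  refine mem_Ysub.2 ⟨j, ?_, h⟩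
  simp only [Finset.mem_Icc] at hj ⊢
  omega

/-- For `n = m+2 ≥ 2`, the natural homomorphism
`β_n : π_n(ℋ_n, 0) → lim← π_n(Y_i^{(n)}, 0)` is surjective: every family of classes
`γ i ∈ π_n(Y_{i+1}^{(n)}, 0)` compatible under the retractions `r_k^i` is induced by a
single class in `π_n(ℋ_n, 0)` via the retractions `R_i`. -/
theorem beta_surjective (m : ℕ)
    (R : ∀ i : ℕ, C(↥(hawaiian (m+2)), ↥(Ysub (m+2) (i+1))))
    (hRfix : ∀ (i : ℕ) (z : ↥(hawaiian (m+2))),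
      (z : EuclideanSpace ℝ (Fin (m+3))) ∈ Ysub (m+2) (i+1) →
      ((R i z : ↥(Ysub (m+2) (i+1))) : EuclideanSpace ℝ (Fin (m+3))) = z)
    (hRcoll : ∀ (i j : ℕ), i + 1 < j → ∀ z : ↥(hawaiian (m+2)),
      (z : EuclideanSpace ℝ (Fin (m+3))) ∈ hawSphere (m+2) j →
      ((R i z : ↥(Ysub (m+2) (i+1))) : EuclideanSpace ℝ (Fin (m+3))) = 0)
    (hR0 : ∀ i : ℕ, R i (hawaiianPt (m+2)) = YsubPt (m+2) i)
    (r : ∀ i k : ℕ, k ≤ i → C(↥(Ysub (m+2) (i+1)), ↥(Ysub (m+2) (k+1))))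
    (hrfix : ∀ (i k : ℕ) (hki : k ≤ i) (z : ↥(Ysub (m+2) (i+1))),
      (z : EuclideanSpace ℝ (Fin (m+3))) ∈ Ysub (m+2) (k+1) →
      ((r i k hki z : ↥(Ysub (m+2) (k+1))) : EuclideanSpace ℝ (Fin (m+3))) = z)
    (hrcoll : ∀ (i k : ℕ) (hki : k ≤ i) (j : ℕ), k + 1 < j → j ≤ i + 1 →
      ∀ z : ↥(Ysub (m+2) (i+1)),
      (z : EuclideanSpace ℝ (Fin (m+3))) ∈ hawSphere (m+2) j →
      ((r i k hki z : ↥(Ysub (m+2) (k+1))) : EuclideanSpace ℝ (Fin (m+3))) = 0)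
    (hr0 : ∀ (i k : ℕ) (hki : k ≤ i), r i k hki (YsubPt (m+2) i) = YsubPt (m+2) k)
    (γ : ∀ i : ℕ, HomotopyGroup (Fin (m+2)) (Ysub (m+2) (i+1)) (YsubPt (m+2) i))
    (hγ : ∀ (k i : ℕ) (hki : k ≤ i),
      piInduced (Fin (m+2)) (r i k hki) (hr0 i k hki) (γ i) = γ k) :
    ∃ g : HomotopyGroup (Fin (m+2)) (hawaiian (m+2)) (hawaiianPt (m+2)),
      ∀ i : ℕ, piInduced (Fin (m+2)) (R i) (hR0 i) g = γ i := by
  have step : ∀ i, ∃ b : Ω^ (Fin (m+2)) (hawaiian (m+2)) (hawaiianPt (m+2)),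
      (∀ x, (b x : EuclideanSpace ℝ (Fin (m+3))) ∈ hawSphere (m+2) (i+1+1)) ∧
      ∀ p : Ω^ (Fin (m+2)) (hawaiian (m+2)) (hawaiianPt (m+2)),
        (∀ x, (p x : EuclideanSpace ℝ (Fin (m+3))) ∈ Ysub (m+2) (i+1)) →
        (⟦GenLoop.compCM (R i) (hR0 i) p⟧ : HomotopyGroup _ _ _) = γ i →
        (⟦GenLoop.compCM (R (i+1)) (hR0 (i+1)) (GenLoop.transAt 0 p b)⟧ :
          HomotopyGroup _ _ _) = γ (i+1) := by
    intro i
    obtain ⟨f, hf⟩ := Quotient.exists_rep (γ (i+1))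
    obtain ⟨a, b, ha, hb, hfab⟩ := split m i f
    let inc : C(Ysub (m+2) (i+1+1), hawaiian (m+2)) := incCM (Ysub_subset_hawaiian _ _)
    let ι : C(Ysub (m+2) (i+1), Ysub (m+2) (i+1+1)) := incCM (Ysub_subset_succ _ _)
    have hinc : inc (YsubPt (m+2) (i+1)) = hawaiianPt (m+2) := rfl
    have hι : ι (YsubPt (m+2) i) = YsubPt (m+2) (i+1) := rfl
    refine ⟨GenLoop.compCM inc hinc b, hb, fun p hp hpγ => ?_⟩
    have e1 : GenLoop.compCM (R (i+1)) (hR0 (i+1)) (GenLoop.compCM inc hinc b) = b := by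
      apply GenLoop.ext
      intro x
      refine Subtype.ext ?_
      exact hRfix (i+1) _ (b x).2
    have e2 : GenLoop.compCM (r (i+1) i (Nat.le_succ i)) (hr0 (i+1) i (Nat.le_succ i)) b
        = GenLoop.const := by
      apply GenLoop.ext
      intro x
      refine Subtype.ext ?_
      exact hrcoll (i+1) i (Nat.le_succ i) (i+1+1) (by omega) le_rfl _ (hb x)
    have e3 : GenLoop.compCM ι hι (GenLoop.compCM (r (i+1) i (Nat.le_succ i))
        (hr0 (i+1) i (Nat.le_succ i)) a) = a := by
      apply GenLoop.ext
      intro x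
      refine Subtype.ext ?_
      exact hrfix (i+1) i (Nat.le_succ i) _ (ha x)
    have e4 : GenLoop.compCM ι hι (GenLoop.compCM (R i) (hR0 i) p) =
        GenLoop.compCM (R (i+1)) (hR0 (i+1)) p := by
      apply GenLoop.ext
      intro x
      refine Subtype.ext ?_
      exact (hRfix i _ (hp x)).trans (hRfix (i+1) _ (Ysub_subset_succ _ _ (hp x))).symm
    have h1 := hγ i (i+1) (Nat.le_succ i)
    rw [← hf, ← hpγ] at h1
    have h2 : GenLoop.Homotopic (GenLoop.compCM (r (i+1) i (Nat.le_succ i))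
        (hr0 (i+1) i (Nat.le_succ i)) f) (GenLoop.compCM (R i) (hR0 i) p) := Quotient.exact h1
    have h3 := compCM_congr (r (i+1) i (Nat.le_succ i)) (hr0 (i+1) i (Nat.le_succ i)) hfab
    rw [compCM_transAt, e2] at h3
    have h4 := h2.symm.trans (h3.trans (transAt_const 0 _))
    have h5 := compCM_congr ι hι h4
    rw [e3, e4] at h5
    rw [← hf, compCM_transAt, e1]
    exact Quotient.sound ((transAt_congr 0 h5 (GenLoop.Homotopic.refl b)).trans hfab.symm)
  choose bs hbs hstep using step
  obtain ⟨f0, hf0⟩ := Quotient.exists_rep (γ 0)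
  let inc0 : C(Ysub (m+2) (0+1), hawaiian (m+2)) := incCM (Ysub_subset_hawaiian _ _)
  have hinc0 : inc0 (YsubPt (m+2) 0) = hawaiianPt (m+2) := rfl
  let b : ℕ → Ω^ (Fin (m+2)) (hawaiian (m+2)) (hawaiianPt (m+2)) := fun k =>
    Nat.casesOn k (GenLoop.compCM inc0 hinc0 f0) bs
  have hb : ∀ k x, (b k x : EuclideanSpace ℝ (Fin (m+3))) ∈ hawSphere (m+2) (k+1) := by
    intro k x
    cases k with
    | zero =>
      obtain ⟨j, hj, h⟩ := mem_Ysub.1 (f0 x).2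
      have hj1 : j = 1 := by
        simp only [Finset.mem_Icc] at hj
        omega
      subst hj1
      exact h
    | succ k => exact hbs k x
  have hP : ∀ i, (⟦GenLoop.compCM (R i) (hR0 i) (Pseq 0 b i)⟧ : HomotopyGroup _ _ _) = γ i := by
    intro i
    induction i with
    | zero =>
      have e1 : GenLoop.compCM (R 0) (hR0 0) (GenLoop.compCM inc0 hinc0 f0) = f0 := by
        apply GenLoop.ext
        intro x
        refine Subtype.ext ?_
        exact hRfix 0 _ (f0 x).2
      rw [← hf0]
      exact congrArg _ e1
    | succ i ih => exact hstep i (Pseq 0 b i) (Pseq_mem 0 b hb i) ih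
  obtain ⟨e, he⟩ := exists_limit 0 b hb
  refine ⟨⟦e⟧, fun i => ?_⟩
  have e1 : GenLoop.compCM (R i) (hR0 i) e =
      GenLoop.compCM (R i) (hR0 i) (Eseq 0 b 0 (i+1)) := by
    apply GenLoop.ext
    intro x
    rw [compCM_apply, compCM_apply]
    obtain h | ⟨h, l, hl, h1⟩ := he (i+1) x
    · rw [h]
    · rw [h, hR0]
      exact Subtype.ext (hRcoll i l (by omega) _ h1)
  rw [← hP i]
  change (⟦GenLoop.compCM (R i) (hR0 i) e⟧ : HomotopyGroup _ _ _) = _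
  rw [e1]
  exact Quotient.sound (compCM_congr (R i) (hR0 i) (Eseq_Pseq' 0 b i))
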